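/- Let (g_0, …, g_{K−1}; i_0, …, i_{K−1}) be a cyclic stabilizer configuration of length K ≥ 3 on Q such that each |g_k| is even and |f_j ∩ g_k| is even for every j ∈ C_X and every k. Suppose every j ∈ C_X with f_j ∩ I ≠ ∅ satisfies f_j ∩ Δ ≠ ∅. Let e ⊆ Q satisfy e ∩ I = {i_0} and |e ∩ (g_k \ I)| = |g_k|/2 − 1 for every k (so that |e ∩ Δ| = |Δ|/2). Then no family τ satisfies the simplified dual inequalities for e. -/

import Mathlib

open Finset

/-- The simplified dual inequalities for an error `e`. -/
def SimpDual {Q C_X : Type*} [Fintype C_X] [DecidableEq Q]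
    (f : C_X → Finset Q) (e : Finset Q) (τ : C_X → Q → ℝ) : Prop :=
  (∀ i, ∑ j ∈ Finset.univ.filter (fun j => i ∈ f j), τ j i ≤
      if i ∈ e then (-1 : ℝ) else 1) ∧
  (∀ j, ∀ i ∈ f j, ∀ i' ∈ f j, i ≠ i' → 0 ≤ τ j i + τ j i')

/-- The iterated symmetric difference `g 0 ∆ g 1 ∆ ⋯ ∆ g (K-1)`. -/
def iterSD {Q : Type*} [DecidableEq Q] (K : ℕ) (g : ZMod K → Finset Q) : Finset Q :=
  (List.range K).foldr (fun k acc => symmDiff (g (k : ZMod K)) acc) ∅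

/-!
Sum the dual inequalities over `Δ = iterSD K g`. Each check meets `Δ` in an even number of qubits,
and at most one of its weights is negative, outweighed by any other; so its weights on `Δ` have a
nonnegative sum. Since `e` covers half of `Δ`, these sums add up to at most `0`. The vertex
inequality at a qubit `q ∈ e` outside `Δ` forces some check `j` at `q` to have `τ j q < 0`. Then
`τ j` is positive on the rest of `f j`, in particular on the nonempty set `f j ∩ Δ`, and the total
over all checks is positive, a contradiction. The qubit `idx 0` is such a `q`, as it belongs to
exactly two of the sets `g k`.
-/

section FinsetSums

variable {α : Type*}

lemma sum_nonneg_of_pairwise_add_nonneg {M : Type*} [AddCommGroup M] [LinearOrder M]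
    [IsOrderedAddMonoid M] {S : Finset α} {t : α → M} (hS : #S ≠ 1)
    (ht : (S : Set α).Pairwise fun i i' ↦ 0 ≤ t i + t i') : 0 ≤ ∑ i ∈ S, t i := by
  classical
  by_cases hnonneg : ∀ i ∈ S, 0 ≤ t i
  · exact sum_nonneg hnonneg
  push Not at hnonneg
  obtain ⟨m, hm, hm_neg⟩ := hnonneg
  obtain ⟨x, hx⟩ : (S.erase m).Nonempty := by
    rw [← card_pos, card_erase_of_mem hm]
    have := card_pos.mpr ⟨m, hm⟩
    lia
  have hpair {i : α} (hi : i ∈ S.erase m) : 0 ≤ t m + t i :=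
    ht hm (mem_of_mem_erase hi) (ne_of_mem_erase hi).symm
  have hothers : ∀ i ∈ S.erase m, 0 ≤ t i := fun i hi ↦
    (pos_of_lt_add_right (hm_neg.trans_le (hpair hi))).le
  calc
    0 ≤ t m + t x := hpair hx
    _ ≤ t m + ∑ i ∈ S.erase m, t i := by gcongr; exact single_le_sum hothers hx
    _ = ∑ i ∈ S, t i := add_sum_erase S t hm

lemma sum_ite_mem_neg_one_one [DecidableEq α] {R : Type*} [Ring R] (A e : Finset α) :
    ∑ i ∈ A, (if i ∈ e then (-1 : R) else 1) = #A - 2 * #(e ∩ A) := by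
  have hite (i : α) : (if i ∈ e then (-1 : R) else 1) = 1 - 2 * if i ∈ e then 1 else 0 := by
    split_ifs <;> norm_num
  simp only [hite, sum_sub_distrib, ← mul_sum, sum_boole, filter_mem_eq_inter, inter_comm e A,
    sum_const, nsmul_one]

end FinsetSums

section SimpDual

variable {Q C_X : Type*} [Fintype C_X] [DecidableEq Q] {f : C_X → Finset Q} {e A : Finset Q}
  {τ : C_X → Q → ℝ} {q : Q}

namespace SimpDual

lemma sum_inter_nonneg (h : SimpDual f e τ) {j : C_X} (hA : #(f j ∩ A) ≠ 1) :
    0 ≤ ∑ i ∈ f j ∩ A, τ j i :=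
  sum_nonneg_of_pairwise_add_nonneg hA fun i hi i' hi' ↦
    h.2 j i (mem_of_mem_inter_left hi) i' (mem_of_mem_inter_left hi')

lemma sum_sum_inter_le (h : SimpDual f e τ) (A : Finset Q) :
    ∑ j, ∑ i ∈ f j ∩ A, τ j i ≤ #A - 2 * #(e ∩ A) := by
  calc
    ∑ j, ∑ i ∈ f j ∩ A, τ j i = ∑ i ∈ A, ∑ j with i ∈ f j, τ j i :=
      sum_comm' fun j i ↦ by simp
    _ ≤ ∑ i ∈ A, (if i ∈ e then (-1 : ℝ) else 1) := sum_le_sum fun i _ ↦ h.1 i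
    _ = #A - 2 * #(e ∩ A) := sum_ite_mem_neg_one_one A e

lemma exists_neg_of_mem (h : SimpDual f e τ) (hq : q ∈ e) : ∃ j, q ∈ f j ∧ τ j q < 0 := by
  have hsum : ∑ j with q ∈ f j, τ j q < 0 := by
    have := h.1 q
    rw [if_pos hq] at this
    linarith
  simpa using exists_lt_of_sum_lt (hsum.trans_eq sum_const_zero.symm)

lemma sum_inter_pos (h : SimpDual f e τ) {j : C_X} (hq : q ∈ f j) (hneg : τ j q < 0)
    (hqA : q ∉ A) (hA : (f j ∩ A).Nonempty) : 0 < ∑ i ∈ f j ∩ A, τ j i := by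
  refine sum_pos (fun i hi ↦ ?_) hA
  obtain ⟨hif, hiA⟩ := mem_inter.mp hi
  linarith [h.2 j i hif q hq (ne_of_mem_of_not_mem hiA hqA)]

end SimpDual

theorem not_simpDual_of_card_inter_ne_one (hfA : ∀ j, #(f j ∩ A) ≠ 1) (heA : #A ≤ 2 * #(e ∩ A))
    (hqe : q ∈ e) (hqA : q ∉ A) (hq : ∀ j, q ∈ f j → (f j ∩ A).Nonempty) :
    ¬ SimpDual f e τ := by
  intro h
  obtain ⟨j, hqj, hneg⟩ := h.exists_neg_of_mem hqe
  have hpos : 0 < ∑ j, ∑ i ∈ f j ∩ A, τ j i :=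
    sum_pos' (fun j _ ↦ h.sum_inter_nonneg (hfA j))
      ⟨j, mem_univ j, h.sum_inter_pos hqj hneg hqA (hq j hqj)⟩
  have heA' : (#A : ℝ) ≤ 2 * #(e ∩ A) := mod_cast heA
  linarith [h.sum_sum_inter_le A]

end SimpDual

section IteratedSymmDiff

open scoped symmDiff

variable {ι α : Type*} [DecidableEq α]

lemma even_card_symmDiff_iff (A B : Finset α) : Even #(A ∆ B) ↔ (Even #A ↔ Even #B) := by
  have hcard : #(A ∆ B) = #(A \ B) + #(B \ A) :=
    card_union_of_disjoint disjoint_sdiff_sdiff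
  have hA := card_sdiff_add_card_inter A B
  have hB := card_sdiff_add_card_inter B A
  rw [inter_comm B A] at hB
  rw [hcard, ← hA, ← hB]
  grind

lemma mem_foldr_symmDiff (s : ι → Finset α) (x : α) (L : List ι) :
    x ∈ L.foldr (fun k acc ↦ s k ∆ acc) ∅ ↔ Odd (L.countP (x ∈ s ·)) := by
  induction L with
  | nil => simp
  | cons k L ih =>
    by_cases hx : x ∈ s k <;> simp [mem_symmDiff, hx, ih, Nat.odd_add_one]

lemma even_card_inter_foldr_symmDiff {s : ι → Finset α} {S : Finset α}
    (hS : ∀ k, Even #(S ∩ s k)) (L : List ι) :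
    Even #(S ∩ L.foldr (fun k acc ↦ s k ∆ acc) ∅) := by
  induction L with
  | nil => simp
  | cons k L ih =>
    rw [List.foldr_cons, ← inf_eq_inter, inf_symmDiff_distrib_left, even_card_symmDiff_iff]
    exact iff_of_true (hS k) ih

variable {K : ℕ}

lemma iterSD_eq_foldr (g : ZMod K → Finset α) :
    iterSD K g =
      ((List.range K).map ((↑) : ℕ → ZMod K)).foldr (fun k acc ↦ g k ∆ acc) ∅ := by
  rw [iterSD, bind_pure_comp, List.map_eq_map]

lemma even_card_inter_iterSD {g : ZMod K → Finset α} {S : Finset α}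
    (hS : ∀ k, Even #(S ∩ g k)) : Even #(S ∩ iterSD K g) := by
  rw [iterSD_eq_foldr]
  exact even_card_inter_foldr_symmDiff hS _

variable [NeZero K]

lemma mem_iterSD {g : ZMod K → Finset α} {x : α} :
    x ∈ iterSD K g ↔ Odd #{k | x ∈ g k} := by
  set L := (List.range K).map ((↑) : ℕ → ZMod K)
  have hnodup : L.Nodup := List.nodup_range.map_on fun a ha b hb hab ↦ by
    rw [← ZMod.val_cast_of_lt (List.mem_range.mp ha), hab,
      ZMod.val_cast_of_lt (List.mem_range.mp hb)]
  have huniv : L.toFinset = univ := eq_univ_iff_forall.mpr fun k ↦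
    List.mem_toFinset.mpr <| List.mem_map.mpr
      ⟨k.val, List.mem_range.mpr k.val_lt, ZMod.natCast_zmod_val k⟩
  rw [iterSD_eq_foldr, mem_foldr_symmDiff, List.countP_eq_length_filter,
    ← List.toFinset_card_of_nodup (hnodup.filter _), List.toFinset_filter, huniv]
  simp only [decide_eq_true_eq]

end IteratedSymmDiff

/-- A cyclic stabilizer configuration `(g₀, …, g_{K-1}; i₀, …, i_{K-1})`, with `idx k` the
qubit `i_k`; indexing by `ZMod K` takes indices mod `K`. -/
structure IsCyclicConfig {Q : Type*} [DecidableEq Q] {K : ℕ} (g : ZMod K → Finset Q)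
    (idx : ZMod K → Q) : Prop where
  three_le : 3 ≤ K
  injective : Function.Injective idx
  inter_succ : ∀ k, g k ∩ g (k + 1) = {idx k}
  inter_eq_empty : ∀ k k', k' ≠ k - 1 → k' ≠ k → k' ≠ k + 1 → g k ∩ g k' = ∅

namespace IsCyclicConfig

variable {Q : Type*} [DecidableEq Q] {K : ℕ} {g : ZMod K → Finset Q} {idx : ZMod K → Q}
  {x : Q} {k k' m : ZMod K}

lemma self_ne_succ (h : IsCyclicConfig g idx) (k : ZMod K) : k ≠ k + 1 := by
  have : Fact (1 < K) := ⟨by have := h.three_le; lia⟩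
  simp

lemma eq_idx_of_mem_of_mem_succ (h : IsCyclicConfig g idx) (hk : x ∈ g k) (hk' : x ∈ g (k + 1)) :
    x = idx k :=
  mem_singleton.mp (h.inter_succ k ▸ mem_inter.mpr ⟨hk, hk'⟩)

lemma idx_mem_inter_succ (h : IsCyclicConfig g idx) (k : ZMod K) : idx k ∈ g k ∩ g (k + 1) :=
  h.inter_succ k ▸ mem_singleton_self (idx k)

lemma exists_eq_idx_of_mem_of_mem (h : IsCyclicConfig g idx) (hne : k ≠ k') (hk : x ∈ g k)
    (hk' : x ∈ g k') : ∃ m, x = idx m ∧ (k = m ∨ k = m + 1) := by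
  by_cases hsucc : k' = k + 1
  · exact ⟨k, h.eq_idx_of_mem_of_mem_succ hk (hsucc ▸ hk'), .inl rfl⟩
  by_cases hpred : k' = k - 1
  · obtain rfl : k = k' + 1 := by rw [hpred, sub_add_cancel]
    exact ⟨k', h.eq_idx_of_mem_of_mem_succ hk' hk, .inr rfl⟩
  · have hempty := h.inter_eq_empty k k' hpred hne.symm hsucc
    exact absurd (hempty ▸ mem_inter.mpr ⟨hk, hk'⟩) (notMem_empty x)

lemma idx_mem_iff (h : IsCyclicConfig g idx) : idx m ∈ g k ↔ k = m ∨ k = m + 1 := by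
  obtain ⟨hself, hsucc⟩ := mem_inter.mp (h.idx_mem_inter_succ m)
  refine ⟨fun hk ↦ ?_, by rintro (rfl | rfl) <;> assumption⟩
  by_cases hkm : k = m
  · exact .inl hkm
  obtain ⟨n, hn, hkn⟩ := h.exists_eq_idx_of_mem_of_mem hkm hk hself
  rwa [h.injective hn]

lemma idx_notMem_iterSD (h : IsCyclicConfig g idx) (m : ZMod K) : idx m ∉ iterSD K g := by
  have : NeZero K := ⟨by have := h.three_le; lia⟩
  have hpair : ({k | idx m ∈ g k} : Finset (ZMod K)) = {m, m + 1} := by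
    ext k
    simp [h.idx_mem_iff]
  simp [mem_iterSD, hpair, card_pair (h.self_ne_succ m)]

variable [NeZero K]

lemma eq_of_mem_of_mem (h : IsCyclicConfig g idx) (hx : x ∉ univ.image idx) (hk : x ∈ g k)
    (hk' : x ∈ g k') : k = k' := by
  by_contra hne
  obtain ⟨m, rfl, -⟩ := h.exists_eq_idx_of_mem_of_mem hne hk hk'
  exact hx (mem_image_of_mem idx (mem_univ m))

lemma mem_iterSD_iff_exists (h : IsCyclicConfig g idx) (hx : x ∉ univ.image idx) :
    x ∈ iterSD K g ↔ ∃ k, x ∈ g k := by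
  have hle : #{k | x ∈ g k} ≤ 1 := card_le_one.mpr fun k hk k' hk' ↦
    h.eq_of_mem_of_mem hx (mem_filter_univ k |>.mp hk) (mem_filter_univ k' |>.mp hk')
  have hpos : 0 < #{k | x ∈ g k} ↔ ∃ k, x ∈ g k := by
    simp [card_pos, Finset.Nonempty]
  rw [mem_iterSD, ← hpos]
  grind

lemma iterSD_eq_biUnion (h : IsCyclicConfig g idx) :
    iterSD K g = univ.biUnion fun k ↦ g k \ univ.image idx := by
  ext x
  by_cases hx : x ∈ univ.image idx
  · obtain ⟨m, -, rfl⟩ := mem_image.mp hx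
    simp [h.idx_notMem_iterSD]
  · simp [h.mem_iterSD_iff_exists hx, hx]

lemma pairwiseDisjoint_sdiff (h : IsCyclicConfig g idx) :
    Pairwise (Function.onFun Disjoint fun k ↦ g k \ univ.image idx) := fun _ _ hne ↦
  disjoint_left.mpr fun _ hk hk' ↦
    have hk := mem_sdiff.mp hk
    hne (h.eq_of_mem_of_mem hk.2 hk.1 (mem_sdiff.mp hk').1)

lemma card_sdiff_add_two (h : IsCyclicConfig g idx) (k : ZMod K) :
    #(g k \ univ.image idx) + 2 = #(g k) := by
  have hinter : g k ∩ univ.image idx = image idx {k, k - 1} := by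
    ext x
    constructor
    · intro hx
      obtain ⟨hxg, hxI⟩ := mem_inter.mp hx
      obtain ⟨m, -, rfl⟩ := mem_image.mp hxI
      rcases h.idx_mem_iff.mp hxg with rfl | rfl <;> simp
    · intro hx
      obtain ⟨m, hm, rfl⟩ := mem_image.mp hx
      simpa [h.idx_mem_iff, eq_sub_iff_add_eq, eq_comm] using hm
  have hne : k ≠ k - 1 := by
    simpa using (h.self_ne_succ (k - 1)).symm
  rw [← card_sdiff_add_card_inter (g k) (univ.image idx), hinter,
    card_image_of_injective _ h.injective, card_pair hne]

lemma card_iterSD_eq_two_mul (h : IsCyclicConfig g idx) {e : Finset Q}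
    (hg : ∀ k, Even #(g k)) (he : ∀ k, #(e ∩ (g k \ univ.image idx)) = #(g k) / 2 - 1) :
    #(iterSD K g) = 2 * #(e ∩ iterSD K g) := by
  have hhalf (k : ZMod K) : #(g k \ univ.image idx) = 2 * #(e ∩ (g k \ univ.image idx)) := by
    have hcard := h.card_sdiff_add_two k
    obtain ⟨n, hn⟩ := hg k
    rw [he k]
    lia
  have hdisj := h.pairwiseDisjoint_sdiff
  rw [h.iterSD_eq_biUnion, inter_biUnion, card_biUnion fun _ _ _ _ hne ↦ hdisj hne,
    card_biUnion fun _ _ _ _ hne ↦ (hdisj hne).mono inter_subset_right inter_subset_right,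
    mul_sum]
  exact sum_congr rfl fun k _ ↦ hhalf k

end IsCyclicConfig

theorem stmt8_general {Q C_X : Type*} [Fintype C_X] [DecidableEq Q] {K : ℕ}
    {f : C_X → Finset Q} {g : ZMod K → Finset Q} {idx : ZMod K → Q} {e : Finset Q} {m : ZMod K}
    (h : IsCyclicConfig g idx) (hfg : ∀ j k, Even #(f j ∩ g k))
    (hm : ∀ j, idx m ∈ f j → (f j ∩ iterSD K g).Nonempty) (hme : idx m ∈ e)
    (he : #(iterSD K g) ≤ 2 * #(e ∩ iterSD K g)) (τ : C_X → Q → ℝ) : ¬ SimpDual f e τ :=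
  not_simpDual_of_card_inter_ne_one
    (fun j hj ↦ by simpa [hj] using even_card_inter_iterSD (hfg j)) he hme
    (h.idx_notMem_iterSD m) hm

/-- A cyclic configuration of even-weight stabilizers yields an error pattern `e`
for which no family `τ` satisfies the simplified dual inequalities. -/
theorem stmt8 {Q C_X : Type*} [Fintype C_X] [DecidableEq Q] (K : ℕ) [NeZero K]
    (hK : 3 ≤ K)
    (f : C_X → Finset Q) (g : ZMod K → Finset Q) (idx : ZMod K → Q)
    (hidx : Function.Injective idx)
    (hadj : ∀ k, g k ∩ g (k + 1) = {idx k})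
    (hfar : ∀ k k' : ZMod K, k' ≠ k - 1 → k' ≠ k → k' ≠ k + 1 → g k ∩ g k' = ∅)
    (hgEven : ∀ k, Even (g k).card)
    (hfgEven : ∀ j k, Even ((f j ∩ g k).card))
    (hX : ∀ j, (f j ∩ Finset.univ.image idx).Nonempty →
      (f j ∩ iterSD K g).Nonempty)
    (e : Finset Q)
    (heI : e ∩ Finset.univ.image idx = {idx 0})
    (hek : ∀ k, (e ∩ (g k \ Finset.univ.image idx)).card = (g k).card / 2 - 1) :
    ∀ τ : C_X → Q → ℝ, ¬ SimpDual f e τ := by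
  have h : IsCyclicConfig g idx := ⟨hK, hidx, hadj, hfar⟩
  exact stmt8_general h hfgEven (fun j hj ↦ hX j ⟨idx 0, by simp [hj]⟩)
    (mem_of_mem_inter_left (heI ▸ mem_singleton_self (idx 0)))
    (h.card_iterSD_eq_two_mul hgEven hek).le
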